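/- arXiv:math/0012063 — 5 statements merged into one kernel-verified Lean document; each statement's English description precedes it below -/
import Mathlib

section
/- The extension F⟨Y_{ij}⟩(X_{ij}) ⊇ F has no new constants: for every u ∈ K with D_K(u) = 0 there exists c ∈ F with d(c) = 0 and u = algebraMap F K c (composing F → R → K). (This is the key step showing that F⟨Y_{ij}⟩(X_{ij}) ⊇ F⟨Y_{ij}⟩ is a Picard–Vessiot extension with differential Galois group GL_n.) -/
open MvPolynomial

/-- The polynomial ring `R = F{Y_ij}[X_ij]`: multivariate polynomials over `F` in the
variables `Y i j k` (indexed by `Sum.inl (i,j,k)`) and `X i j` (indexed by `Sum.inr (i,j)`). -/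
abbrev Rgen (F : Type*) [Field F] (n : ℕ) : Type _ :=
  MvPolynomial ((Fin n × Fin n × ℕ) ⊕ (Fin n × Fin n)) F

/-- `det[X]`: the determinant of the `n × n` matrix whose `(i,j)` entry is the variable `X i j`. -/
noncomputable def detX (F : Type*) [Field F] (n : ℕ) : Rgen F n :=
  (Matrix.of fun i j : Fin n => X (Sum.inr (i, j))).det

/-- The `F`-subalgebra `F{Y}` of `R` generated by all the variables `Y i j k`. -/
noncomputable def FY (F : Type*) [Field F] (n : ℕ) : Subalgebra F (Rgen F n) :=
  Algebra.adjoin F (Set.range fun v : Fin n × Fin n × ℕ => X (Sum.inl v))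

/-- The `F`-subalgebra `F[X]` of `R` generated by all the variables `X i j`. -/
noncomputable def FX (F : Type*) [Field F] (n : ℕ) : Subalgebra F (Rgen F n) :=
  Algebra.adjoin F (Set.range fun v : Fin n × Fin n => X (Sum.inr v))

namespace MvPolynomial

section PDeriv

variable {σ k : Type*}

theorem totalDegree_pderiv_lt [CommSemiring k] {i : σ} {p : MvPolynomial σ k}
    (h : pderiv i p ≠ 0) : (pderiv i p).totalDegree < p.totalDegree := by
  obtain ⟨m, hm, hdeg⟩ := Finset.exists_mem_eq_sup _ (support_nonempty.mpr h)
    (fun m : σ →₀ ℕ => m.sum fun _ e => e)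
  rw [totalDegree, hdeg]
  have hcoeff : coeff (m + Finsupp.single i 1) p ≠ 0 := by
    rw [mem_support_iff, coeff_pderiv] at hm
    exact left_ne_zero_of_mul hm
  have hle := le_totalDegree (mem_support_iff.mpr hcoeff)
  rw [Finsupp.sum_add_index' (by simp) (by simp), Finsupp.sum_single_index rfl] at hle
  exact hle

theorem pderiv_eq_zero_of_dvd [CommRing k] [IsDomain k] {i : σ} {p : MvPolynomial σ k}
    (h : p ∣ pderiv i p) : pderiv i p = 0 := by
  by_contra h0
  obtain ⟨b, hb⟩ := h
  have hlt := totalDegree_pderiv_lt h0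
  rw [hb] at h0 hlt
  rw [totalDegree_mul_of_isDomain (left_ne_zero_of_mul h0) (right_ne_zero_of_mul h0)] at hlt
  omega

theorem eq_C_of_forall_pderiv_eq_zero [CommRing k] [IsDomain k] [CharZero k]
    {p : MvPolynomial σ k} (h : ∀ i, pderiv i p = 0) : p = C (coeff 0 p) := by
  classical
  ext m
  rw [coeff_C]
  split_ifs with hm
  · rw [hm]
  · obtain ⟨i, hi⟩ := Finsupp.ne_iff.mp (Ne.symm hm)
    have hcoeff := congrArg (coeff (m - Finsupp.single i 1)) (h i)
    rw [coeff_pderiv, Finsupp.sub_add_single_one_cancel hi, coeff_zero] at hcoeff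
    exact (mul_eq_zero.mp hcoeff).resolve_right (Nat.cast_add_one_ne_zero _)

theorem derivation_int_ext [CommRing k]
    {D₁ D₂ : Derivation ℤ (MvPolynomial σ k) (MvPolynomial σ k)}
    (hC : ∀ a, D₁ (C a) = D₂ (C a)) (hX : ∀ i, D₁ (X i) = D₂ (X i)) : D₁ = D₂ := by
  ext1 p
  induction p using MvPolynomial.induction_on with
  | C a => exact hC a
  | add p q hp hq => rw [map_add, map_add, hp, hq]
  | mul_X p i hp => rw [Derivation.leibniz, Derivation.leibniz, hp, hX]

end PDeriv

end MvPolynomial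

theorem Derivation.finsetSum_apply {R A M ι : Type*} [CommSemiring R] [CommSemiring A]
    [AddCommMonoid M] [Algebra R A] [Module A M] [Module R M] (s : Finset ι)
    (D : ι → Derivation R A M) (a : A) : (∑ i ∈ s, D i) a = ∑ i ∈ s, D i a := by
  have h := map_sum (coeFnAddMonoidHom : Derivation R A M →+ A → M) D s
  exact (congrFun h a).trans (Finset.sum_apply a s _)

theorem IsRelPrime.exists_eq_mul_of_mul_eq_mul {R : Type*} [CommRing R] [IsDomain R]
    [DecompositionMonoid R] {p q a b : R} (hpq : IsRelPrime p q) (hq : q ≠ 0)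
    (h : a * q = p * b) : ∃ c, a = c * p ∧ b = c * q := by
  obtain ⟨c, rfl⟩ := hpq.symm.dvd_of_dvd_mul_left (Dvd.intro_left a h)
  exact ⟨c, mul_right_cancel₀ hq (by rw [h]; ring), mul_comm q c⟩

theorem detX_ne_zero (F : Type*) [Field F] (n : ℕ) : detX F n ≠ 0 := by
  intro h
  have hdet := congrArg
    (aeval (Sum.elim (fun _ => 0) fun v => (1 : Matrix (Fin n) (Fin n) F) v.1 v.2)) h
  rw [detX, AlgHom.map_det, map_zero] at hdet
  apply one_ne_zero (α := F)
  rw [← hdet, ← Matrix.det_one (n := Fin n)]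
  congr 1
  ext i j
  simp

section Generic

variable {F : Type*} [Field F] {n : ℕ} {D : Derivation ℤ (Rgen F n) (Rgen F n)} {d : F → F}

theorem pderiv_Y_succ_commutator (hD_C : ∀ f : F, D (C f) = C (d f))
    (hD_Y : ∀ (i j : Fin n) (k : ℕ),
      D (X (Sum.inl (i, j, k))) = X (Sum.inl (i, j, k + 1)))
    (hD_X : ∀ i j : Fin n,
      D (X (Sum.inr (i, j))) = ∑ l : Fin n, X (Sum.inl (i, l, 0)) * X (Sum.inr (l, j)))
    (i j : Fin n) (k : ℕ) (p : Rgen F n) :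
    pderiv (Sum.inl (i, j, k + 1)) (D p) - D (pderiv (Sum.inl (i, j, k + 1)) p) =
      pderiv (Sum.inl (i, j, k)) p := by
  classical
  have h : ⁅(pderiv (Sum.inl (i, j, k + 1)) :
        Derivation F (Rgen F n) (Rgen F n)).restrictScalars ℤ, D⁆ =
      (pderiv (Sum.inl (i, j, k))).restrictScalars ℤ := by
    refine derivation_int_ext (fun a => ?_) ?_
    · simp [Derivation.commutator_apply, hD_C]
    rintro (⟨a, b, m⟩ | ⟨a, b⟩)
    · simp only [Derivation.commutator_apply, Derivation.restrictScalars_apply, hD_Y, pderiv_X,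
        Pi.single_apply, Sum.inl.injEq, Prod.mk.injEq, add_left_inj, apply_ite D, map_zero,
        Derivation.map_one_eq_zero, ite_self, sub_zero]
    · simp [Derivation.commutator_apply, hD_X]
  simpa [Derivation.commutator_apply] using congrArg (fun E => E p) h

theorem pderiv_Y_zero_commutator (hD_C : ∀ f : F, D (C f) = C (d f))
    (hD_Y : ∀ (i j : Fin n) (k : ℕ),
      D (X (Sum.inl (i, j, k))) = X (Sum.inl (i, j, k + 1)))
    (hD_X : ∀ i j : Fin n,
      D (X (Sum.inr (i, j))) = ∑ l : Fin n, X (Sum.inl (i, l, 0)) * X (Sum.inr (l, j)))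
    (i l : Fin n) (p : Rgen F n) :
    pderiv (Sum.inl (i, l, 0)) (D p) - D (pderiv (Sum.inl (i, l, 0)) p) =
      ∑ j, X (Sum.inr (l, j)) * pderiv (Sum.inr (i, j)) p := by
  classical
  have h : ⁅(pderiv (Sum.inl (i, l, 0)) :
        Derivation F (Rgen F n) (Rgen F n)).restrictScalars ℤ, D⁆ =
      ∑ j, (X (Sum.inr (l, j)) : Rgen F n) •
        (pderiv (R := F) (Sum.inr (i, j))).restrictScalars ℤ := by
    refine derivation_int_ext (fun a => ?_) ?_
    · simp [Derivation.commutator_apply, hD_C, Derivation.finsetSum_apply]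
    rintro (⟨a, b, m⟩ | ⟨a, b⟩)
    · simp [Derivation.commutator_apply, hD_Y, Pi.single_apply, apply_ite D,
        Derivation.finsetSum_apply]
    · by_cases hi : a = i
      · simp [Derivation.commutator_apply, hD_X, Pi.single_apply, Derivation.finsetSum_apply, hi]
      · simp [Derivation.commutator_apply, hD_X, Derivation.finsetSum_apply, hi]
  simpa [Derivation.commutator_apply, Derivation.finsetSum_apply] using congrArg (fun E => E p) h

theorem exists_forall_pderiv_Y_eq_zero (p : Rgen F n) :
    ∃ N, ∀ (i j : Fin n) (k : ℕ), N ≤ k → pderiv (Sum.inl (i, j, k)) p = 0 := by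
  refine ⟨p.vars.sup (Sum.elim (fun v => v.2.2 + 1) fun _ => 0), fun i j k hk => ?_⟩
  refine pderiv_eq_zero_of_notMem_vars fun hmem => ?_
  have := (Finset.le_sup (f := Sum.elim (fun v => v.2.2 + 1) fun _ => 0) hmem).trans hk
  simp at this

/-- A polynomial dividing its derivative involves none of the variables `Y i j k`. -/
theorem pderiv_Y_eq_zero_of_dvd (hD_C : ∀ f : F, D (C f) = C (d f))
    (hD_Y : ∀ (i j : Fin n) (k : ℕ),
      D (X (Sum.inl (i, j, k))) = X (Sum.inl (i, j, k + 1)))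
    (hD_X : ∀ i j : Fin n,
      D (X (Sum.inr (i, j))) = ∑ l : Fin n, X (Sum.inl (i, l, 0)) * X (Sum.inr (l, j)))
    {p : Rgen F n} (hp : p ∣ D p) (i j : Fin n) (k : ℕ) :
    pderiv (Sum.inl (i, j, k)) p = 0 := by
  obtain ⟨a, ha⟩ := hp
  obtain ⟨N, hN⟩ := exists_forall_pderiv_Y_eq_zero p
  rcases le_total N k with hk | hk
  · exact hN i j k hk
  induction hk using Nat.decreasingInduction with
  | self => exact hN i j N le_rfl
  | of_succ k _ ih =>
    refine pderiv_eq_zero_of_dvd ⟨pderiv (Sum.inl (i, j, k + 1)) a, ?_⟩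
    rw [← pderiv_Y_succ_commutator hD_C hD_Y hD_X, ha, pderiv_mul, ih]
    simp

/-- If `p` and `q` are coprime and `D (p / q) = 0`, then all their partial
derivatives vanish. -/
theorem pderiv_eq_zero_of_isRelPrime (hD_C : ∀ f : F, D (C f) = C (d f))
    (hD_Y : ∀ (i j : Fin n) (k : ℕ),
      D (X (Sum.inl (i, j, k))) = X (Sum.inl (i, j, k + 1)))
    (hD_X : ∀ i j : Fin n,
      D (X (Sum.inr (i, j))) = ∑ l : Fin n, X (Sum.inl (i, l, 0)) * X (Sum.inr (l, j)))
    {p q : Rgen F n} (hpq : IsRelPrime p q) (hq : q ≠ 0) (h : D p * q = p * D q)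
    (v : (Fin n × Fin n × ℕ) ⊕ (Fin n × Fin n)) : pderiv v p = 0 ∧ pderiv v q = 0 := by
  obtain ⟨a, hap, haq⟩ := hpq.exists_eq_mul_of_mul_eq_mul hq h
  have hpY := pderiv_Y_eq_zero_of_dvd hD_C hD_Y hD_X (Dvd.intro_left a hap.symm)
  have hqY := pderiv_Y_eq_zero_of_dvd hD_C hD_Y hD_X (Dvd.intro_left a haq.symm)
  obtain ⟨i, j, k⟩ | ⟨i, j⟩ := v
  · exact ⟨hpY i j k, hqY i j k⟩
  have hw : (fun j => pderiv (Sum.inr (i, j)) p * q - p * pderiv (Sum.inr (i, j)) q) = 0 := by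
    refine Matrix.eq_zero_of_mulVec_eq_zero (detX_ne_zero F n) (funext fun l => ?_)
    have hpl := pderiv_Y_zero_commutator hD_C hD_Y hD_X i l p
    have hql := pderiv_Y_zero_commutator hD_C hD_Y hD_X i l q
    rw [hap, pderiv_mul, hpY, map_zero, mul_zero, add_zero, sub_zero] at hpl
    rw [haq, pderiv_mul, hqY, map_zero, mul_zero, add_zero, sub_zero] at hql
    calc ∑ j, X (Sum.inr (l, j)) *
          (pderiv (Sum.inr (i, j)) p * q - p * pderiv (Sum.inr (i, j)) q)
        = (∑ j, X (Sum.inr (l, j)) * pderiv (Sum.inr (i, j)) p) * q -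
          p * ∑ j, X (Sum.inr (l, j)) * pderiv (Sum.inr (i, j)) q := by
          rw [Finset.sum_mul, Finset.mul_sum, ← Finset.sum_sub_distrib]
          exact Finset.sum_congr rfl fun _ _ => by ring
      _ = 0 := by rw [← hpl, ← hql]; ring
  obtain ⟨b, hbp, hbq⟩ := hpq.exists_eq_mul_of_mul_eq_mul hq (sub_eq_zero.mp (congrFun hw j))
  exact ⟨pderiv_eq_zero_of_dvd (Dvd.intro_left b hbp.symm),
    pderiv_eq_zero_of_dvd (Dvd.intro_left b hbq.symm)⟩

end Generic

/-- The generic extension `F⟨Y_ij⟩(X_ij) ⊇ F` has no new constants: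
every constant of the fraction field `K` of `R = F{Y}[X]` is (the image of) a constant
of `F`. -/
theorem stmt_15
    {F : Type*} [Field F] [CharZero F] (d : F → F)
    (hd_add : ∀ a b : F, d (a + b) = d a + d b)
    (hd_mul : ∀ a b : F, d (a * b) = d a * b + a * d b)
    (n : ℕ) (hn : 1 ≤ n)
    (D : Rgen F n → Rgen F n)
    (hD_add : ∀ a b, D (a + b) = D a + D b)
    (hD_mul : ∀ a b, D (a * b) = D a * b + a * D b)
    (hD_C : ∀ f : F, D (C f) = C (d f))
    (hD_Y : ∀ (i j : Fin n) (k : ℕ),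
      D (X (Sum.inl (i, j, k))) = X (Sum.inl (i, j, k + 1)))
    (hD_X : ∀ i j : Fin n,
      D (X (Sum.inr (i, j))) = ∑ l : Fin n, X (Sum.inl (i, l, 0)) * X (Sum.inr (l, j)))
    (DK : FractionRing (Rgen F n) → FractionRing (Rgen F n))
    (hDK_add : ∀ a b, DK (a + b) = DK a + DK b)
    (hDK_mul : ∀ a b, DK (a * b) = DK a * b + a * DK b)
    (hDK_comp : ∀ r : Rgen F n,
      DK (algebraMap (Rgen F n) (FractionRing (Rgen F n)) r) =
        algebraMap (Rgen F n) (FractionRing (Rgen F n)) (D r)) :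
    ∀ u : FractionRing (Rgen F n), DK u = 0 →
      ∃ c : F, d c = 0 ∧
        u = algebraMap (Rgen F n) (FractionRing (Rgen F n)) (C c) := by
  intro u hu
  let DR : Derivation ℤ (Rgen F n) (Rgen F n) :=
    Derivation.mk' (AddMonoidHom.mk' D hD_add).toIntLinearMap fun a b => by
      simp [hD_mul]; ring
  obtain ⟨p, q, hpq, rfl⟩ := IsFractionRing.exists_reduced_fraction (Rgen F n) u
  have hq : (q : Rgen F n) ≠ 0 := nonZeroDivisors.coe_ne_zero q
  set u := IsLocalization.mk' (FractionRing (Rgen F n)) p q with hu_def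
  have hspec : u * algebraMap _ (FractionRing (Rgen F n)) (q : Rgen F n) = algebraMap _ _ p :=
    IsLocalization.mk'_spec _ p q
  have hDpq : D p * q = p * D q := by
    apply IsFractionRing.injective (Rgen F n) (FractionRing (Rgen F n))
    have hDspec := congrArg DK hspec
    rw [hDK_mul, hu, zero_mul, zero_add, hDK_comp, hDK_comp] at hDspec
    rw [map_mul, map_mul, ← hDspec, ← hspec]
    ring
  have hderiv := pderiv_eq_zero_of_isRelPrime (D := DR) hD_C hD_Y hD_X hpq hq hDpq
  have hpC := eq_C_of_forall_pderiv_eq_zero fun v => (hderiv v).1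
  have hqC := eq_C_of_forall_pderiv_eq_zero fun v => (hderiv v).2
  have hq0 : coeff 0 (q : Rgen F n) ≠ 0 := fun h0 => hq (by rw [hqC, h0, C_0])
  have huC : u = algebraMap (Rgen F n) (FractionRing (Rgen F n))
      (C (coeff 0 p / coeff 0 (q : Rgen F n))) := by
    rw [hu_def, IsLocalization.mk'_eq_iff_eq_mul, ← map_mul, hpC, hqC]
    simp [← C_mul, hq0]
  refine ⟨_, ?_, huC⟩
  apply C_injective _ F
  apply IsFractionRing.injective (Rgen F n) (FractionRing (Rgen F n))
  rw [← hD_C, ← hDK_comp, ← huC, hu, C_0, map_zero]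
end

section
/- The following are equivalent: (i) the field of constants of K reduces to C, i.e. every u ∈ K with D(u) = 0 lies in the image of C under the composite embedding C ⊆ F → K; (ii) the family of m + n² elements of K consisting of the images of t_1, …, t_m together with the indeterminates X_{ij} (1 ≤ i,j ≤ n) is algebraically independent over the subfield of constants 𝒞. -/
open MvPolynomial

/-- The field of rational functions `K = F(X_ij)` in `n²` indeterminates over `F`. -/
abbrev Kgen (F : Type*) [Field F] (n : ℕ) : Type _ :=
  FractionRing (MvPolynomial (Fin n × Fin n) F)

/-- The subfield of constants of a field `K` equipped with a derivation `D`. -/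
def constSubfield {K : Type*} [Field K] (D : K → K)
    (hD_add : ∀ a b : K, D (a + b) = D a + D b)
    (hD_mul : ∀ a b : K, D (a * b) = D a * b + a * D b) : Subfield K where
  carrier := {c | D c = 0}
  zero_mem' := by
    have h := hD_add 0 0
    rw [add_zero] at h
    nth_rewrite 1 [← add_zero (D 0)] at h
    exact (add_left_cancel h).symm
  one_mem' := by
    have h := hD_mul 1 1
    rw [mul_one, one_mul, mul_one] at h
    nth_rewrite 1 [← add_zero (D 1)] at h
    exact (add_left_cancel h).symm
  add_mem' := by
    intro a b ha hb
    simp only [Set.mem_setOf_eq] at *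
    rw [hD_add, ha, hb, add_zero]
  neg_mem' := by
    intro a ha
    simp only [Set.mem_setOf_eq] at *
    have h0 : D 0 = 0 := by
      have h := hD_add 0 0
      rw [add_zero] at h
      nth_rewrite 1 [← add_zero (D 0)] at h
      exact (add_left_cancel h).symm
    have h := hD_add a (-a)
    rw [add_neg_cancel, h0, ha, zero_add] at h
    exact h.symm
  mul_mem' := by
    intro a b ha hb
    simp only [Set.mem_setOf_eq] at *
    rw [hD_mul, ha, hb, zero_mul, mul_zero, add_zero]
  inv_mem' := by
    intro a ha
    simp only [Set.mem_setOf_eq] at *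
    rcases eq_or_ne a 0 with rfl | h
    · rwa [inv_zero]
    · have h1 : D 1 = 0 := by
        have h := hD_mul 1 1
        rw [mul_one, one_mul, mul_one] at h
        nth_rewrite 1 [← add_zero (D 1)] at h
        exact (add_left_cancel h).symm
      have hm := hD_mul a a⁻¹
      rw [mul_inv_cancel₀ h, h1, ha, zero_mul, zero_add] at hm
      rcases mul_eq_zero.mp hm.symm with h' | h'
      · exact absurd h' h
      · exact h'

open scoped nonZeroDivisors

/-- If a transcendence basis of `A` over `R` stays algebraically independent over an intermediate
ring `S`, then `S` is algebraic over `R`. -/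
theorem IsTranscendenceBasis.isAlgebraic_of_algebraicIndependent
    {ι R S A : Type*} [CommRing R] [CommRing S] [CommRing A] [Nontrivial A]
    [Algebra R S] [Algebra S A] [Algebra R A] [IsScalarTower R S A] {x : ι → A}
    (hR : IsTranscendenceBasis R x) (hS : AlgebraicIndependent S x) :
    Algebra.IsAlgebraic R S := by
  have := (algebraMap R A).domain_nontrivial
  refine ⟨fun u ↦ of_not_not fun hu ↦ ?_⟩
  have hind := (algebraicIndependent_unique_type_iff (x := fun _ : Unit ↦ u).mpr hu).sumElim_comp hS
  have hrange := hR.2 _ hind.coe_range (by rw [Set.Sum.elim_range]; exact Set.subset_union_left)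
  obtain ⟨i, hi⟩ : algebraMap S A u ∈ Set.range x := hrange ▸ ⟨.inr (), rfl⟩
  exact Sum.inl_ne_inr (hind.injective (a₁ := .inl i) (a₂ := .inr ()) hi)

/-- Over an algebraically closed field `k`, a transcendence basis of `A` is algebraically
independent over an intermediate field exactly when that field is `k` itself. -/
theorem IsTranscendenceBasis.algebraicIndependent_iff_surjective
    {ι k L A : Type*} [Field k] [IsAlgClosed k] [Field L] [CommRing A] [Nontrivial A]
    [Algebra L A] [Algebra k A] {x : ι → A} (hx : IsTranscendenceBasis k x)
    (φ : k →+* L) (hφ : (algebraMap L A).comp φ = algebraMap k A) :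
    AlgebraicIndependent L x ↔ Function.Surjective φ := by
  refine ⟨fun hL ↦ ?_, fun hsurj ↦ ?_⟩
  · let _ : Algebra k L := φ.toAlgebra
    have : IsScalarTower k L A := .of_algebraMap_eq' hφ.symm
    have := hx.isAlgebraic_of_algebraicIndependent hL
    exact IsAlgClosed.algebraMap_bijective_of_isIntegral.2
  · exact hx.1.ringHom_of_comp_eq φ (RingHom.id A) hsurj Function.injective_id hφ

/-- A transcendence basis of `F` over `k`, together with the indeterminates, is a transcendence
basis over `k` of the field of rational functions over `F`. -/
theorem IsTranscendenceBasis.sumElim_fractionRing_mvPolynomial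
    {ι σ k F : Type*} [Field k] [Field F] [Algebra k F] {t : ι → F}
    (ht : IsTranscendenceBasis k t) :
    IsTranscendenceBasis k (Sum.elim
      (fun i ↦ algebraMap (MvPolynomial σ F) (FractionRing (MvPolynomial σ F)) (C (t i)))
      (fun v ↦ algebraMap (MvPolynomial σ F) (FractionRing (MvPolynomial σ F)) (X v))) := by
  have := IsLocalization.isAlgebraic (FractionRing (MvPolynomial σ F)) (MvPolynomial σ F)⁰
  have hX := (IsTranscendenceBasis.mvPolynomial σ F).algebraMap_comp
    (A := FractionRing (MvPolynomial σ F))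
  refine (isTranscendenceBasis_equiv' (Equiv.sumComm _ _) ?_).mp (ht.sumElim_comp hX)
  ext (v | i) <;> rfl

/-- Let `F` be a differential field of characteristic zero whose field
of constants `C` is algebraically closed, with `F` of finite transcendence degree over
`C` via `t 1, …, t m`.  Extend the derivation to `K = F(X_ij)` by
`D X_ij = ∑_ℓ f_iℓ • X_ℓj`.  Then the constants of `K` reduce to `C` iff the images of
`t 1, …, t m` together with the `X_ij` are algebraically independent over the subfield
of constants `𝒞` of `K`. -/
theorem stmt_16
    {F : Type*} [Field F] [CharZero F] (d : F → F)
    (hd_add : ∀ a b : F, d (a + b) = d a + d b)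
    (hd_mul : ∀ a b : F, d (a * b) = d a * b + a * d b)
    (hC_closed : IsAlgClosed (constSubfield d hd_add hd_mul))
    (m : ℕ) (t : Fin m → F)
    (ht_ind : AlgebraicIndependent (constSubfield d hd_add hd_mul) t)
    (ht_alg : Algebra.IsAlgebraic
      (Subfield.closure ((constSubfield d hd_add hd_mul : Set F) ∪ Set.range t)) F)
    (n : ℕ) (hn : 1 ≤ n) (f : Fin n → Fin n → F)
    (D : Kgen F n → Kgen F n)
    (hD_add : ∀ a b, D (a + b) = D a + D b)
    (hD_mul : ∀ a b, D (a * b) = D a * b + a * D b)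
    (hD_F : ∀ g : F,
      D (algebraMap (MvPolynomial (Fin n × Fin n) F) (Kgen F n) (C g)) =
        algebraMap (MvPolynomial (Fin n × Fin n) F) (Kgen F n) (C (d g)))
    (hD_X : ∀ i j : Fin n,
      D (algebraMap (MvPolynomial (Fin n × Fin n) F) (Kgen F n) (X (i, j))) =
        ∑ l : Fin n,
          algebraMap (MvPolynomial (Fin n × Fin n) F) (Kgen F n) (C (f i l)) *
            algebraMap (MvPolynomial (Fin n × Fin n) F) (Kgen F n) (X (l, j))) :
    (∀ u : Kgen F n, D u = 0 →
        ∃ c : F, d c = 0 ∧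
          u = algebraMap (MvPolynomial (Fin n × Fin n) F) (Kgen F n) (C c)) ↔
      AlgebraicIndependent (constSubfield D hD_add hD_mul)
        (Sum.elim
          (fun i : Fin m =>
            algebraMap (MvPolynomial (Fin n × Fin n) F) (Kgen F n) (C (t i)))
          (fun v : Fin n × Fin n =>
            algebraMap (MvPolynomial (Fin n × Fin n) F) (Kgen F n) (X v))) := by
  have ht : IsTranscendenceBasis (constSubfield d hd_add hd_mul) t := by
    refine ht_ind.isTranscendenceBasis_iff_isAlgebraic.mpr
      (IntermediateField.isAlgebraic_adjoin_iff_top.mp ?_)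
    have hclosure : (IntermediateField.adjoin (constSubfield d hd_add hd_mul)
        (Set.range t)).toSubfield =
        Subfield.closure ((constSubfield d hd_add hd_mul : Set F) ∪ Set.range t) := by
      rw [IntermediateField.adjoin_toSubfield]
      congr 2
      exact Subtype.range_coe
    rw [← hclosure] at ht_alg
    exact ht_alg
  let φ : constSubfield d hd_add hd_mul →+* constSubfield D hD_add hD_mul :=
    (algebraMap (constSubfield d hd_add hd_mul) (Kgen F n)).codRestrict _ fun c ↦
      (hD_F c).trans (by rw [show d c = 0 from c.2, map_zero, map_zero])
  rw [ht.sumElim_fractionRing_mvPolynomial.algebraicIndependent_iff_surjective φ rfl]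
  constructor
  · rintro h ⟨u, hu⟩
    obtain ⟨c, hc, rfl⟩ := h u hu
    exact ⟨⟨c, hc⟩, rfl⟩
  · intro h u hu
    obtain ⟨c, hc⟩ := h ⟨u, hu⟩
    exact ⟨c, c.2, (congrArg Subtype.val hc).symm⟩
end

section
/- For k ≥ 1 let 𝕋_k denote the finite set of all elements of K of the form t_1^{a_1}⋯t_m^{a_m}·∏_{i,j} X_{ij}^{b_{ij}} with Σ_i a_i + Σ_{i,j} b_{ij} ≤ k, let N_k be its cardinality, and define the Wronskian W_k of 𝕋_k to be the determinant of the N_k × N_k matrix whose rows are indexed by the elements w of 𝕋_k (in some fixed enumeration) and whose entry in row w and column j (1 ≤ j ≤ N_k) is the iterated derivative D^(j−1)(w); the enumeration affects W_k only by a sign. Then the field of constants of K reduces to C (every u ∈ K with D(u) = 0 lies in the image of C under the composite embedding C ⊆ F → K) if and only if W_k ≠ 0 for every k ≥ 1. -/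
open MvPolynomial

/-- The set `𝕋 k` of all monomials `t₁^{a₁} ⋯ t_m^{a_m} · ∏ X_ij^{b_ij}` in `K` of total
degree at most `k`. -/
def monomialSet {F : Type*} [Field F] {m : ℕ} (t : Fin m → F) (n k : ℕ) :
    Set (Kgen F n) :=
  {u | ∃ (a : Fin m → ℕ) (b : Fin n → Fin n → ℕ),
    ((∑ i, a i) + ∑ i, ∑ j, b i j) ≤ k ∧
    u = (∏ i, algebraMap (MvPolynomial (Fin n × Fin n) F) (Kgen F n) (C (t i)) ^ a i) *
        ∏ i, ∏ j,
          algebraMap (MvPolynomial (Fin n × Fin n) F) (Kgen F n) (X (i, j)) ^ b i j}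

section Wronskian

variable {K : Type*} [Field K]

/-- An additive map satisfying the Leibniz rule, as a bundled derivation. -/
def derivationOfLeibniz (D : K → K) (hadd : ∀ a b, D (a + b) = D a + D b)
    (hmul : ∀ a b, D (a * b) = D a * b + a * D b) : Derivation ℤ K K :=
  Derivation.mk' (AddMonoidHom.mk' D hadd).toIntLinearMap fun a b => by
    simp [hmul, mul_comm, add_comm]

theorem iterate_sum_const_mul (δ : Derivation ℤ K K) {ι : Type*} [Fintype ι] (v c : ι → K)
    (hc : ∀ r, δ (c r) = 0) (j : ℕ) :
    δ^[j] (∑ r, c r * v r) = ∑ r, c r * δ^[j] (v r) := by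
  induction j with
  | zero => rfl
  | succ j ih => simp [Function.iterate_succ_apply', ih, map_sum, Derivation.leibniz, hc]

theorem eq_zero_of_sum_mul_iterate_eq_zero (δ : Derivation ℤ K K) :
    ∀ {N : ℕ} (v : Fin N → K),
      (∀ c : Fin N → K, (∀ r, δ (c r) = 0) → ∑ r, c r * v r = 0 → c = 0) →
      ∀ x : Fin N → K, (∀ j < N, ∑ r, x r * δ^[j] (v r) = 0) → x = 0
  | 0, _, _, _, _ => Subsingleton.elim _ _
  | N + 1, v, hv, x, hx => by
    have hinit : ∀ x : Fin N → K,
        (∀ j < N, ∑ r, x r * δ^[j] (v r.castSucc) = 0) → x = 0 := by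
      refine eq_zero_of_sum_mul_iterate_eq_zero δ (fun r => v r.castSucc) fun c hc h => ?_
      have := hv (Fin.snoc c 0)
        (fun r => by refine Fin.lastCases ?_ (fun i => ?_) r <;> simp [hc])
        (by simpa [Fin.sum_univ_castSucc] using h)
      ext i
      simpa using congrFun this i.castSucc
    by_cases hlast : x (Fin.last N) = 0
    · have h0 := hinit (fun r => x r.castSucc) fun j hj => by
        simpa [Fin.sum_univ_castSucc, hlast] using hx j (by omega)
      ext r
      exact Fin.lastCases hlast (fun i => congrFun h0 i) r
    · exfalso
      let z : Fin (N + 1) → K := fun r => (x (Fin.last N))⁻¹ * x r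
      have hz : ∀ j < N + 1, ∑ r, z r * δ^[j] (v r) = 0 := fun j hj => by
        simp only [z, mul_assoc, ← Finset.mul_sum, hx j hj, mul_zero]
      have hz1 : z (Fin.last N) = 1 := inv_mul_cancel₀ hlast
      have hconst := hinit (fun r => δ (z r.castSucc)) fun j hj => by
        have h := congrArg δ (hz j (by omega))
        have h' := hz (j + 1) (by omega)
        simp only [map_sum, Derivation.leibniz, smul_eq_mul, Finset.sum_add_distrib, map_zero,
          ← Function.iterate_succ_apply' (⇑δ), Nat.succ_eq_add_one, h', zero_add] at h
        simpa [Fin.sum_univ_castSucc, hz1, mul_comm] using h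
      have hz0 := hv z
        (fun r => Fin.lastCases (by simp [hz1]) (fun i => congrFun hconst i) r)
        (by simpa using hz 0 (by omega))
      exact one_ne_zero (hz1.symm.trans (congrFun hz0 _))

/-- The Wronskian of a finite family is nonzero iff the family is linearly independent over the
constants. -/
theorem wronskian_ne_zero_iff (D : K → K) (hadd : ∀ a b, D (a + b) = D a + D b)
    (hmul : ∀ a b, D (a * b) = D a * b + a * D b) {N : ℕ} (v : Fin N → K) :
    (Matrix.of fun r c : Fin N => D^[(c : ℕ)] (v r)).det ≠ 0 ↔
      ∀ c : Fin N → K, (∀ r, D (c r) = 0) → ∑ r, c r * v r = 0 → c = 0 := by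
  obtain ⟨δ, rfl⟩ : ∃ δ : Derivation ℤ K K, ⇑δ = D := ⟨derivationOfLeibniz D hadd hmul, rfl⟩
  constructor
  · intro h c hc hcv
    refine Matrix.eq_zero_of_vecMul_eq_zero h (funext fun j => ?_)
    have := iterate_sum_const_mul δ v c hc j
    rw [hcv, Function.iterate_fixed (map_zero δ)] at this
    simpa [Matrix.vecMul, dotProduct] using this.symm
  · intro h hdet
    obtain ⟨x, hx0, hx⟩ := Matrix.exists_vecMul_eq_zero_iff.mpr hdet
    refine hx0 (eq_zero_of_sum_mul_iterate_eq_zero δ v h x fun j hj => ?_)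
    simpa [Matrix.vecMul, dotProduct] using congrFun hx ⟨j, hj⟩

/-- The constants of a derivation, as an algebra over any ring of constants. -/
def constSubalgebra (R : Type*) [CommRing R] [Algebra R K] (D : K → K)
    (hadd : ∀ a b, D (a + b) = D a + D b) (hmul : ∀ a b, D (a * b) = D a * b + a * D b)
    (hR : ∀ r : R, D (algebraMap R K r) = 0) : Subalgebra R K where
  __ := (constSubfield D hadd hmul).toSubsemiring
  algebraMap_mem' := hR

end Wronskian

section AlgebraicIndependence

theorem aeval_sum_monomial {R A σ ι : Type*} [CommRing R] [CommRing A] [Algebra R A] [Fintype ι]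
    (y : σ → A) (e : ι → σ →₀ ℕ) (c : ι → R) :
    aeval y (∑ r, monomial (e r) (c r)) =
      ∑ r, algebraMap R A (c r) * (e r).prod fun s a => y s ^ a := by
  simp [map_sum, aeval_monomial]

theorem AlgebraicIndependent.eq_zero_of_sum_monomial {R A σ ι : Type*} [CommRing R] [CommRing A]
    [Algebra R A] [Fintype ι] {y : σ → A} (hy : AlgebraicIndependent R y) {e : ι → σ →₀ ℕ}
    (he : Function.Injective e) {c : ι → R}
    (h : ∑ r, algebraMap R A (c r) * ((e r).prod fun s a => y s ^ a) = 0) : c = 0 := by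
  classical
  have h0 := algebraicIndependent_iff.mp hy _ ((aeval_sum_monomial y e c).trans h)
  ext r
  simpa [coeff_sum, coeff_monomial, he.eq_iff] using congrArg (coeff (e r)) h0

theorem AlgebraicIndependent.prod_pow_injective {R A σ : Type*} [CommRing R] [Nontrivial R]
    [CommRing A] [Algebra R A] {y : σ → A} (hy : AlgebraicIndependent R y) :
    Function.Injective fun e : σ →₀ ℕ => e.prod fun s a => y s ^ a := by
  intro e e' h
  have : monomial e (1 : R) = monomial e' 1 := hy (by simpa [aeval_monomial] using h)
  exact (monomial_left_inj one_ne_zero).mp this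

/-- An element of `S` is algebraic over `R` as soon as some transcendence basis of `A` over `R`
stays algebraically independent over `S`. -/
theorem IsTranscendenceBasis.isAlgebraic_of_algebraicIndependent_s17 {R S A σ : Type*} [Field R]
    [CommRing S] [Field A] [Algebra R S] [Algebra S A] [Algebra R A] [IsScalarTower R S A]
    {y : σ → A} (hy : IsTranscendenceBasis R y) (hS : AlgebraicIndependent S y) (u : S) :
    IsAlgebraic R u := by
  by_contra hu
  have hu' : AlgebraicIndependent R fun _ : Unit => u :=
    algebraicIndependent_unique_type_iff.mpr hu
  have h := (hu'.sumElim_comp hS).comp Sum.swap Sum.swap_leftInverse.injective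
  rw [show Sum.elim y (algebraMap S A ∘ fun _ : Unit => u) ∘ Sum.swap =
    Sum.elim (algebraMap S A ∘ fun _ : Unit => u) y by ext (_ | _) <;> rfl] at h
  exact (AlgebraicIndependent.sumElim_iff.mp h).2.transcendental ()
    (hy.isAlgebraic.isAlgebraic _)

theorem IsAlgebraic.mem_range_algebraMap_of_isAlgClosed {k A : Type*} [Field k] [IsAlgClosed k]
    [Field A] [Algebra k A] {u : A} (hu : IsAlgebraic k u) : u ∈ Set.range (algebraMap k A) :=
  minpoly.mem_range_of_degree_eq_one k u
    (IsAlgClosed.degree_eq_one_of_irreducible k (minpoly.irreducible hu.isIntegral))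

theorem isTranscendenceBasis_of_isAlgebraic_closure {F ι : Type*} [Field F] (k : Subfield F)
    {t : ι → F} (ht : AlgebraicIndependent k t)
    (halg : Algebra.IsAlgebraic (Subfield.closure ((k : Set F) ∪ Set.range t)) F) :
    IsTranscendenceBasis k t := by
  rw [ht.isTranscendenceBasis_iff_isAlgebraic]
  have hE : Algebra.IsAlgebraic (IntermediateField.adjoin k (Set.range t)) F := by
    have : (IntermediateField.adjoin k (Set.range t)).toSubfield =
        Subfield.closure ((k : Set F) ∪ Set.range t) := by
      rw [IntermediateField.adjoin_toSubfield]
      congr 2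
      exact Subtype.range_coe
    rw [← this] at halg
    exact halg
  exact IntermediateField.isAlgebraic_adjoin_iff_top.mp hE

end AlgebraicIndependence

section Generators

variable {F : Type*} [Field F] {m : ℕ}

/-- The generators `X_ij` and `t_i` of `K`, as a single family. -/
noncomputable def generators (t : Fin m → F) (n : ℕ) : (Fin n × Fin n) ⊕ Fin m → Kgen F n :=
  Sum.elim (algebraMap (MvPolynomial (Fin n × Fin n) F) (Kgen F n) ∘ X)
    (algebraMap F (Kgen F n) ∘ t)

theorem algebraMap_Kgen (n : ℕ) (g : F) :
    algebraMap F (Kgen F n) g = algebraMap (MvPolynomial (Fin n × Fin n) F) (Kgen F n) (C g) :=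
  IsScalarTower.algebraMap_apply F (MvPolynomial (Fin n × Fin n) F) (Kgen F n) g

theorem isTranscendenceBasis_generators {k : Subfield F} {t : Fin m → F}
    (ht : IsTranscendenceBasis k t) (n : ℕ) : IsTranscendenceBasis k (generators t n) := by
  have : Algebra.IsAlgebraic (MvPolynomial (Fin n × Fin n) F) (Kgen F n) :=
    IsLocalization.isAlgebraic _ (nonZeroDivisors (MvPolynomial (Fin n × Fin n) F))
  exact ht.sumElim_comp ((IsTranscendenceBasis.mvPolynomial _ F).algebraMap_comp (A := Kgen F n))

theorem mem_monomialSet_iff (t : Fin m → F) (n k : ℕ) (u : Kgen F n) :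
    u ∈ monomialSet t n k ↔
      ∃ e : (Fin n × Fin n) ⊕ Fin m →₀ ℕ, e.degree ≤ k ∧
        (e.prod fun s a => generators t n s ^ a) = u := by
  have hprod (e : (Fin n × Fin n) ⊕ Fin m →₀ ℕ) : (e.prod fun s a => generators t n s ^ a) =
      (∏ i, algebraMap (MvPolynomial (Fin n × Fin n) F) (Kgen F n) (C (t i)) ^ e (.inr i)) *
        ∏ i, ∏ j, algebraMap (MvPolynomial (Fin n × Fin n) F) (Kgen F n) (X (i, j)) ^
          e (.inl (i, j)) := by
    rw [Finsupp.prod_fintype _ _ fun _ => pow_zero _, Fintype.prod_sum_type,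
      Fintype.prod_prod_type, mul_comm]
    simp only [generators, Sum.elim_inl, Sum.elim_inr, Function.comp_apply, algebraMap_Kgen]
  have hdeg (e : (Fin n × Fin n) ⊕ Fin m →₀ ℕ) :
      e.degree = (∑ i, e (.inr i)) + ∑ i, ∑ j, e (.inl (i, j)) := by
    rw [Finsupp.degree_eq_sum, Fintype.sum_sum_type, Fintype.sum_prod_type, add_comm]
  constructor
  · rintro ⟨a, b, hab, rfl⟩
    refine ⟨Finsupp.equivFunOnFinite.symm (Sum.elim (fun p => b p.1 p.2) a), ?_, ?_⟩
    · simpa [hdeg] using hab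
    · simp [hprod]
  · rintro ⟨e, he, rfl⟩
    exact ⟨fun i => e (.inr i), fun i j => e (.inl (i, j)), (hdeg e) ▸ he, hprod e⟩

/-- Some enumeration of the monomials of degree at most `k` is indexed by exponents. -/
theorem exists_enumeration_monomialSet {t : Fin m → F} {n : ℕ}
    (hinj : Function.Injective fun e : (Fin n × Fin n) ⊕ Fin m →₀ ℕ =>
      e.prod fun s a => generators t n s ^ a) (k : ℕ) :
    ∃ (N : ℕ) (e : Fin N ≃ {e : (Fin n × Fin n) ⊕ Fin m →₀ ℕ | e.degree ≤ k}),
      (Function.Injective fun r => (e r).1.prod fun s a => generators t n s ^ a) ∧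
      (Set.range fun r => (e r).1.prod fun s a => generators t n s ^ a) = monomialSet t n k := by
  have : Finite {e : (Fin n × Fin n) ⊕ Fin m →₀ ℕ | e.degree ≤ k} :=
    Finsupp.finite_of_degree_le k
  obtain ⟨N, ⟨e⟩⟩ := Finite.exists_equiv_fin {e : (Fin n × Fin n) ⊕ Fin m →₀ ℕ | e.degree ≤ k}
  refine ⟨N, e.symm, (hinj.comp Subtype.val_injective).comp e.symm.injective, ?_⟩
  ext u
  rw [mem_monomialSet_iff]
  constructor
  · rintro ⟨r, rfl⟩
    exact ⟨_, (e.symm r).2, rfl⟩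
  · rintro ⟨x, hx, rfl⟩
    exact ⟨e ⟨x, hx⟩, by simp⟩

/-- If all Wronskians of monomials are nonzero, the generators are algebraically independent over
any ring of constants. -/
theorem algebraicIndependent_generators_of_wronskian_ne_zero {t : Fin m → F} {n : ℕ}
    (hinj : Function.Injective fun e : (Fin n × Fin n) ⊕ Fin m →₀ ℕ =>
      e.prod fun s a => generators t n s ^ a) (D : Kgen F n → Kgen F n)
    (hadd : ∀ a b, D (a + b) = D a + D b) (hmul : ∀ a b, D (a * b) = D a * b + a * D b)
    (hW : ∀ k : ℕ, 1 ≤ k → ∀ (N : ℕ) (w : Fin N → Kgen F n),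
        Function.Injective w → Set.range w = monomialSet t n k →
        (Matrix.of fun r c : Fin N => D^[(c : ℕ)] (w r)).det ≠ 0)
    {S : Type*} [CommRing S] [Algebra S (Kgen F n)]
    (hS : Function.Injective (algebraMap S (Kgen F n)))
    (hD : ∀ s : S, D (algebraMap S (Kgen F n) s) = 0) :
    AlgebraicIndependent S (generators t n) := by
  classical
  rw [algebraicIndependent_iff]
  intro p hp
  obtain ⟨N, e, hw, hrange⟩ := exists_enumeration_monomialSet hinj (p.totalDegree + 1)
  have hpsum : ∑ r, monomial (e r).1 (coeff (e r).1 p) = p := by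
    ext x
    simp only [coeff_sum, coeff_monomial]
    by_cases hx : x.degree ≤ p.totalDegree + 1
    · rw [Finset.sum_eq_single (e.symm ⟨x, hx⟩)]
      · simp
      · intro r _ hr
        rw [if_neg]
        rintro rfl
        exact hr (by simp)
      · simp
    · rw [Finset.sum_eq_zero fun r _ => if_neg fun h : (e r).1 = x => hx (h ▸ (e r).2)]
      refine (coeff_eq_zero_of_totalDegree_lt ?_).symm
      have : x.degree = ∑ i ∈ x.support, x i := rfl
      omega
  rw [← hpsum, aeval_sum_monomial] at hp
  have hc := (wronskian_ne_zero_iff D hadd hmul _).mp (hW _ (by omega) N _ hw hrange) _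
    (fun r => hD _) hp
  rw [← hpsum]
  refine Finset.sum_eq_zero fun r _ => ?_
  rw [hS ((congrFun hc r).trans (map_zero _).symm), monomial_zero]

end Generators

/-- With the setup of the specialization theorem, the constants of
`K = F(X_ij)` reduce to `C` iff for every `k ≥ 1` the Wronskian `W k` of the set `𝕋 k`
of monomials of degree at most `k` in the `t i` and the `X_ij` — the determinant of the
matrix whose row indexed by `w ∈ 𝕋 k` has entries the iterated derivatives
`D^[j-1] w` — is nonzero (for any, equivalently every, enumeration of `𝕋 k`). -/
theorem stmt_17
    {F : Type*} [Field F] [CharZero F] (d : F → F)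
    (hd_add : ∀ a b : F, d (a + b) = d a + d b)
    (hd_mul : ∀ a b : F, d (a * b) = d a * b + a * d b)
    (hC_closed : IsAlgClosed (constSubfield d hd_add hd_mul))
    (m : ℕ) (t : Fin m → F)
    (ht_ind : AlgebraicIndependent (constSubfield d hd_add hd_mul) t)
    (ht_alg : Algebra.IsAlgebraic
      (Subfield.closure ((constSubfield d hd_add hd_mul : Set F) ∪ Set.range t)) F)
    (n : ℕ) (hn : 1 ≤ n) (f : Fin n → Fin n → F)
    (D : Kgen F n → Kgen F n)
    (hD_add : ∀ a b, D (a + b) = D a + D b)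
    (hD_mul : ∀ a b, D (a * b) = D a * b + a * D b)
    (hD_F : ∀ g : F,
      D (algebraMap (MvPolynomial (Fin n × Fin n) F) (Kgen F n) (C g)) =
        algebraMap (MvPolynomial (Fin n × Fin n) F) (Kgen F n) (C (d g)))
    (hD_X : ∀ i j : Fin n,
      D (algebraMap (MvPolynomial (Fin n × Fin n) F) (Kgen F n) (X (i, j))) =
        ∑ l : Fin n,
          algebraMap (MvPolynomial (Fin n × Fin n) F) (Kgen F n) (C (f i l)) *
            algebraMap (MvPolynomial (Fin n × Fin n) F) (Kgen F n) (X (l, j))) :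
    (∀ u : Kgen F n, D u = 0 →
        ∃ c : F, d c = 0 ∧
          u = algebraMap (MvPolynomial (Fin n × Fin n) F) (Kgen F n) (C c)) ↔
      ∀ k : ℕ, 1 ≤ k → ∀ (N : ℕ) (w : Fin N → Kgen F n),
        Function.Injective w → Set.range w = monomialSet t n k →
        (Matrix.of fun r c : Fin N => D^[(c : ℕ)] (w r)).det ≠ 0 := by
  set k₀ := constSubfield d hd_add hd_mul
  have hbasis := isTranscendenceBasis_generators
    (isTranscendenceBasis_of_isAlgebraic_closure k₀ ht_ind ht_alg) n
  have hmap (c : k₀) : algebraMap k₀ (Kgen F n) c =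
      algebraMap (MvPolynomial (Fin n × Fin n) F) (Kgen F n) (C (c : F)) := by
    rw [← algebraMap_Kgen]
    exact IsScalarTower.algebraMap_apply k₀ F (Kgen F n) c
  have hD_const (c : k₀) : D (algebraMap k₀ (Kgen F n) c) = 0 := by
    rw [hmap, hD_F, show d c = 0 from c.2, map_zero, map_zero]
  constructor
  · intro hconst k _ N w hw hrange
    rw [wronskian_ne_zero_iff D hD_add hD_mul]
    intro c hc hsum
    choose e _ he using fun r =>
      (mem_monomialSet_iff t n k (w r)).mp (hrange ▸ Set.mem_range_self r)
    choose c' hc' hcc' using fun r => hconst (c r) (hc r)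
    have hcmap (r : Fin N) : algebraMap k₀ (Kgen F n) ⟨c' r, hc' r⟩ = c r :=
      (hmap _).trans (hcc' r).symm
    have he_inj : Function.Injective e := fun r s h => hw (by rw [← he r, ← he s, h])
    have h0 := hbasis.1.eq_zero_of_sum_monomial he_inj (c := fun r => ⟨c' r, hc' r⟩)
      (by simpa only [hcmap, he] using hsum)
    ext r
    rw [← hcmap r, congrFun h0 r]
    simp
  · intro hW u hu
    let S := constSubalgebra k₀ D hD_add hD_mul hD_const
    have hS : AlgebraicIndependent S (generators t n) :=
      algebraicIndependent_generators_of_wronskian_ne_zero hbasis.1.prod_pow_injective D hD_add hD_mul hW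
        Subtype.val_injective fun s => s.2
    have halg : IsAlgebraic k₀ u :=
      (hbasis.isAlgebraic_of_algebraicIndependent_s17 hS ⟨u, hu⟩).algebraMap (A := Kgen F n)
    obtain ⟨c, hc⟩ := halg.mem_range_algebraMap_of_isAlgClosed
    exact ⟨c, c.2, by rw [← hc, hmap]⟩
end

section
/- Assume f_{11}·f_{22} − f_{12}·f_{21} = 0 and f_{22} ≠ 0. Then the element θ := ((f_{21}/f_{22})·X_{12} + X_{22}) / (X_{11}·X_{22} − X_{12}·X_{21}) of K is a new constant: D(θ) = 0, and θ does not lie in the image of C under the embedding C → K. -/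
open MvPolynomial

/-- The field `K = C(X₁₁, X₁₂, X₂₁, X₂₂)` of rational functions in four indeterminates. -/
abbrev K2 (C : Type*) [Field C] : Type _ :=
  FractionRing (MvPolynomial (Fin 2 × Fin 2) C)

/-- The image of the indeterminate `X i j` in `K`. -/
noncomputable def xv {C : Type*} [Field C] (i j : Fin 2) : K2 C :=
  algebraMap (MvPolynomial (Fin 2 × Fin 2) C) (K2 C) (X (i, j))

/-- The image of the scalar `c ∈ C` in `K`. -/
noncomputable def cv {C : Type*} [Field C] (c : C) : K2 C :=
  algebraMap (MvPolynomial (Fin 2 × Fin 2) C) (K2 C) (MvPolynomial.C c)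

/-- A derivation kills the quotient of two elements with the same logarithmic derivative. -/
theorem leibniz_div_eq_zero {F : Type*} [Field F] {D : F → F}
    (hD_mul : ∀ a b, D (a * b) = D a * b + a * D b) {a b t : F} (hb : b ≠ 0)
    (hDa : D a = t * a) (hDb : D b = t * b) : D (a / b) = 0 := by
  have h := hD_mul (a / b) b
  rw [div_mul_cancel₀ a hb, hDa, hDb, mul_left_comm, div_mul_cancel₀ a hb] at h
  simpa [hb] using h

/-- The generic `2 × 2` determinant is nonzero in `K2 C`. -/
theorem xv_det_ne_zero {C : Type*} [Field C] :
    (xv 0 0 * xv 1 1 - xv 0 1 * xv 1 0 : K2 C) ≠ 0 := by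
  intro h
  simp only [xv, ← map_mul, ← map_sub] at h
  rw [IsFractionRing.to_map_eq_zero_iff] at h
  simpa using congrArg (eval fun p : Fin 2 × Fin 2 => if p.1 = p.2 then (1 : C) else 0) h

/-- A linear form `r X₁₂ + X₂₂` is not a scalar multiple of the generic determinant. -/
theorem cv_mul_xv_add_xv_ne_cv_mul_det {C : Type*} [Field C] (r c : C) :
    (cv r * xv 0 1 + xv 1 1 : K2 C) ≠ cv c * (xv 0 0 * xv 1 1 - xv 0 1 * xv 1 0) := by
  intro h
  simp only [xv, cv, ← map_mul, ← map_sub, ← map_add] at h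
  have heval := congrArg (eval fun p : Fin 2 × Fin 2 => if p = (1, 1) then (1 : C) else 0)
    (IsFractionRing.injective _ _ h)
  simp at heval

/-- Suppose `det[f_ij] = 0` and `f₂₂ ≠ 0`.  Then
`θ = ((f₂₁/f₂₂)·X₁₂ + X₂₂)/(X₁₁X₂₂ − X₁₂X₂₁)` is a new constant of `K`: `D θ = 0` and
`θ` is not in the image of `C`.  (Indices are 1-based in the paper; here `X₁₂ = xv 0 1`,
`f₂₂ = f 1 1`, etc.) -/
theorem stmt_18
    {C : Type*} [Field C] [CharZero C]
    (f : Fin 2 → Fin 2 → C)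
    (D : K2 C → K2 C)
    (hD_add : ∀ a b, D (a + b) = D a + D b)
    (hD_mul : ∀ a b, D (a * b) = D a * b + a * D b)
    (hD_C : ∀ c : C, D (cv c) = 0)
    (hD_X : ∀ i j : Fin 2, D (xv i j) = ∑ l : Fin 2, cv (f i l) * xv l j)
    (hdet : f 0 0 * f 1 1 - f 0 1 * f 1 0 = 0)
    (hf22 : f 1 1 ≠ 0) :
    D ((cv (f 1 0 / f 1 1) * xv 0 1 + xv 1 1) / (xv 0 0 * xv 1 1 - xv 0 1 * xv 1 0)) = 0 ∧
    ((cv (f 1 0 / f 1 1) * xv 0 1 + xv 1 1) / (xv 0 0 * xv 1 1 - xv 0 1 * xv 1 0) : K2 C)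
      ∉ Set.range (cv (C := C)) := by
  have hcv_mul (a b : C) : cv (a * b) = cv a * cv b := by simp [cv]
  have hD_sub (a b : K2 C) : D (a - b) = D a - D b := by
    rw [eq_sub_iff_add_eq, ← hD_add, sub_add_cancel]
  have hr : cv (f 1 0 / f 1 1) * cv (f 1 1) = cv (f 1 0) := by
    rw [← hcv_mul, div_mul_cancel₀ _ hf22]
  have hr_diag : cv (f 1 0 / f 1 1) * cv (f 0 1) = cv (f 0 0) := by
    rw [← hcv_mul]
    congr 1
    field_simp
    linear_combination -hdet
  refine ⟨leibniz_div_eq_zero hD_mul (t := cv (f 0 0) + cv (f 1 1)) xv_det_ne_zero ?_ ?_, ?_⟩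
  · simp only [hD_add, hD_mul, hD_C, hD_X, Fin.sum_univ_two]
    linear_combination xv 1 1 * hr_diag - xv 0 1 * hr
  · simp only [hD_sub, hD_mul, hD_X, Fin.sum_univ_two]
    ring
  · rintro ⟨c, hc⟩
    exact cv_mul_xv_add_xv_ne_cv_mul_det _ c ((eq_div_iff xv_det_ne_zero).1 hc).symm
end

section
/- The element Y_{22} does not belong to the differential ideal {Y_{11}Y_{22}, Y_{12}} of A: Y_{22,0} ∉ Ideal.span({D^[k](Y_{11,0}·Y_{22,0}) | k ∈ ℕ} ∪ {Y_{12,k} | k ∈ ℕ}), where D^[k] denotes the k-th iterate of D (note D^[k](Y_{12,0}) = Y_{12,k}). -/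
open MvPolynomial

/-- The ring of differential polynomials `A = C{Y₁₁, Y₁₂, Y₂₁, Y₂₂}`: multivariate
polynomials over `C` in the variables `Y i j k` (with `Y i j := Y i j 0`). -/
abbrev A2 (C : Type*) [Field C] : Type _ :=
  MvPolynomial ((Fin 2 × Fin 2) × ℕ) C

/-- A map obeying additivity and the Leibniz rule that sends a set `S` into itself
preserves the ideal generated by `S`. -/
theorem map_mem_span_of_leibniz {R : Type*} [CommRing R] {D : R → R} {S : Set R}
    (hadd : ∀ a b, D (a + b) = D a + D b)
    (hmul : ∀ a b, D (a * b) = D a * b + a * D b)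
    (hS : ∀ s ∈ S, D s ∈ S) {a : R} (ha : a ∈ Ideal.span S) : D a ∈ Ideal.span S := by
  induction ha using Submodule.span_induction with
  | mem x hx => exact Ideal.subset_span (hS x hx)
  | zero =>
    have h : D 0 = 0 := by simpa using hadd 0 0
    simp [h]
  | add x y _ _ hx hy =>
    rw [hadd]
    exact Ideal.add_mem _ hx hy
  | smul r x hx' hx =>
    rw [smul_eq_mul, hmul]
    exact Ideal.add_mem _ (Ideal.mul_mem_left _ _ hx') (Ideal.mul_mem_left _ _ hx)

/-- `Y₂₂` does not belong to the differential ideal `{Y₁₁Y₂₂, Y₁₂}`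
of `A = C{Y₁₁, Y₁₂, Y₂₁, Y₂₂}`, i.e. the ideal generated by all iterated derivatives of
`Y₁₁·Y₂₂` together with all the `Y₁₂ₖ = D^[k] Y₁₂`. -/
theorem stmt_19
    {C : Type*} [Field C] [CharZero C]
    (D : A2 C → A2 C)
    (hD_add : ∀ a b, D (a + b) = D a + D b)
    (hD_mul : ∀ a b, D (a * b) = D a * b + a * D b)
    (hD_C : ∀ c : C, D (MvPolynomial.C c) = 0)
    (hD_Y : ∀ (i j : Fin 2) (k : ℕ), D (X ((i, j), k)) = X ((i, j), k + 1)) :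
    (X (((1 : Fin 2), (1 : Fin 2)), (0 : ℕ)) : A2 C) ∉
      Ideal.span
        ((Set.range fun k : ℕ =>
            D^[k] (X (((0 : Fin 2), (0 : Fin 2)), (0 : ℕ)) *
              X (((1 : Fin 2), (1 : Fin 2)), (0 : ℕ)))) ∪
          (Set.range fun k : ℕ => (X (((0 : Fin 2), (1 : Fin 2)), k) : A2 C))) := by
  intro hmem
  let S : Set (A2 C) := Set.range fun k : ℕ => X (((0 : Fin 2), (0 : Fin 2)), k)
  have hS : ∀ s ∈ S, D s ∈ S := by
    rintro _ ⟨k, rfl⟩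
    exact ⟨k + 1, (hD_Y 0 0 k).symm⟩
  have hiter : ∀ k : ℕ, D^[k] (X (((0 : Fin 2), (0 : Fin 2)), (0 : ℕ)) *
      X (((1 : Fin 2), (1 : Fin 2)), (0 : ℕ))) ∈ Ideal.span S := by
    intro k
    induction k with
    | zero => exact Ideal.mul_mem_right _ _ (Ideal.subset_span ⟨0, rfl⟩)
    | succ k ih =>
      rw [Function.iterate_succ_apply']
      exact map_mem_span_of_leibniz hD_add hD_mul hS ih
  -- Evaluate at the point where the `Y₂₂` variables are `1` and all others vanish.
  let φ : A2 C →+* C := eval fun v => if v.1 = (1, 1) then 1 else 0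
  have hSφ : Ideal.span S ≤ RingHom.ker φ := by
    rw [Ideal.span_le]
    rintro _ ⟨k, rfl⟩
    simp [φ, RingHom.mem_ker]
  have h : X (((1 : Fin 2), (1 : Fin 2)), (0 : ℕ)) ∈ RingHom.ker φ := by
    refine Ideal.span_le.2 (Set.union_subset ?_ ?_) hmem
    · exact Set.range_subset_iff.2 fun k => hSφ (hiter k)
    · rintro _ ⟨k, rfl⟩
      simp [φ, RingHom.mem_ker]
  simp [φ, RingHom.mem_ker] at h
end
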